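/- arXiv:2401.03807 — 2 statements merged into one kernel-verified Lean document; each statement's English description precedes it below -/
import Mathlib

section
/- Let q ≥ 2 be an integer, σ > 0 a real number, and C a real number with σ/√π ≤ C ≤ q/2. Then Σ_{x∈ℤ, C < x < q/2} √(ϑ_{σ,q}(x)) ≤ ((1 + √2·σ)/√σ) · (C/(√2·σ)) · √(2πe) · exp(−πC²/(2σ²)), where ϑ_{σ,q} is evaluated at the class of x modulo q. -/
/-- One-dimensional folded discrete Gaussian `ϑ_{σ,q}` on `ℤ/qℤ`, via the
representative `x̄ ∈ (−q/2, q/2]` (`ZMod.valMinAbs`). -/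
noncomputable def theta1 (σ : ℝ) (q : ℕ) (x : ZMod q) : ℝ :=
  (∑' k : ℤ, Real.exp (-Real.pi * ((x.valMinAbs : ℝ) + q * k) ^ 2 / σ ^ 2)) /
    ∑' k : ℤ, Real.exp (-Real.pi * (k : ℝ) ^ 2 / σ ^ 2)

lemma gauss_anti {b : ℝ} (hb : 0 < b) :
    AntitoneOn (fun x : ℝ => Real.exp (-b * x ^ 2)) (Set.Ici 0) := by
  intro x hx y hy hxy
  have h : x ^ 2 ≤ y ^ 2 := pow_le_pow_left₀ hx hxy 2
  apply Real.exp_le_exp.2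
  nlinarith

lemma gauss_nat_summable {b : ℝ} (hb : 0 < b) :
    Summable (fun n : ℕ => Real.exp (-b * (n : ℝ) ^ 2)) :=
  (gauss_anti hb).summable_of_integrableOn_Ioi_zero
    (integrableOn_Ioi_exp_neg_mul_sq_iff.2 hb) (fun _ _ => (Real.exp_pos _).le)

lemma gauss_summable {b : ℝ} (hb : 0 < b) :
    Summable (fun n : ℤ => Real.exp (-b * (n : ℝ) ^ 2)) := by
  apply Summable.of_nat_of_neg
  · simpa using gauss_nat_summable hb
  · simpa using gauss_nat_summable hb

lemma gauss_tsum_le {b : ℝ} (hb : 0 < b) :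
    ∑' n : ℤ, Real.exp (-b * (n : ℝ) ^ 2) ≤ 1 + √(Real.pi / b) := by
  have h1 : Summable (fun n : ℕ => Real.exp (-b * ((n : ℝ) + 1) ^ 2)) := by
    simpa using (summable_nat_add_iff 1).2 (gauss_nat_summable hb)
  have h2 : ∑' n : ℕ, Real.exp (-b * ((n : ℝ) + 1) ^ 2) ≤ √(Real.pi / b) / 2 := by
    rw [← integral_gaussian_Ioi]
    have := (gauss_anti hb).tsum_add_one_le_integral
      (integrableOn_Ioi_exp_neg_mul_sq_iff.2 hb) (fun _ _ => (Real.exp_pos _).le)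
    simpa using this
  have e : ∀ n : ℕ, ((-((n : ℝ) + 1)) ^ 2) = ((n : ℝ) + 1) ^ 2 := fun n => by ring
  rw [tsum_of_add_one_of_neg_add_one]
  · push_cast
    simp only [e]
    simp
    simp only [neg_mul] at h2
    linarith
  · push_cast; exact h1
  · push_cast; simp only [e]; exact h1

lemma gauss_tsum_ge {σ : ℝ} (hσ : 0 < σ) :
    σ ≤ ∑' k : ℤ, Real.exp (-Real.pi * (k : ℝ) ^ 2 / σ ^ 2) := by
  have h := Real.tsum_exp_neg_mul_int_sq (a := (σ ^ 2)⁻¹) (by positivity)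
  have e : ∀ k : ℤ, -Real.pi * (k : ℝ) ^ 2 / σ ^ 2 = -Real.pi * (σ ^ 2)⁻¹ * (k : ℝ) ^ 2 :=
    fun k => by field_simp
  simp only [e]
  rw [h, ← Real.sqrt_eq_rpow, Real.sqrt_inv, Real.sqrt_sq hσ.le]
  have hs := gauss_summable (b := Real.pi / (σ ^ 2)⁻¹) (by positivity)
  have := hs.le_tsum 0 (fun _ _ => (Real.exp_pos _).le)
  simp only [← neg_div] at this
  have h1 : (1 : ℝ) ≤ ∑' n : ℤ, Real.exp (-Real.pi / (σ ^ 2)⁻¹ * (n : ℝ) ^ 2) := by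
    refine le_trans (by simp) this
  have : 1 / σ⁻¹ = σ := by simp
  rw [this]
  nlinarith

lemma sqrt_tsum_sq_le {f : ℤ → ℝ} (hf : Summable f) (h0 : ∀ k, 0 ≤ f k) :
    √(∑' k, f k ^ 2) ≤ ∑' k, f k := by
  have hB : 0 ≤ ∑' k, f k := tsum_nonneg h0
  apply Real.sqrt_le_iff.2 ⟨hB, ?_⟩
  have hle : ∀ k, f k ^ 2 ≤ (∑' k, f k) * f k := fun k => by
    have := hf.le_tsum k (fun _ _ => h0 _)
    nlinarith [h0 k]
  have hs : Summable (fun k => f k ^ 2) :=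
    Summable.of_nonneg_of_le (fun _ => sq_nonneg _) hle (hf.mul_left _)
  calc _ ≤ ∑' k, (∑' k, f k) * f k := hs.tsum_le_tsum hle (hf.mul_left _)
    _ = _ := by rw [tsum_mul_left, sq]

theorem stmt_16 (q : ℕ) [NeZero q] (hq : 2 ≤ q) (σ C : ℝ) (hσ : 0 < σ)
    (hC1 : σ / Real.sqrt Real.pi ≤ C) (hC2 : C ≤ (q : ℝ) / 2) :
    (∑' x : {x : ℤ // C < (x : ℝ) ∧ (x : ℝ) < (q : ℝ) / 2},
        Real.sqrt (theta1 σ q ((x.1 : ℤ) : ZMod q))) ≤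
      (1 + Real.sqrt 2 * σ) / Real.sqrt σ * (C / (Real.sqrt 2 * σ)) *
        Real.sqrt (2 * Real.pi * Real.exp 1) *
        Real.exp (-Real.pi * C ^ 2 / (2 * σ ^ 2)) := by
  have hpi := Real.pi_pos
  have hsp : 0 < √Real.pi := Real.sqrt_pos.2 hpi
  have hC0 : 0 < C := lt_of_lt_of_le (by positivity) hC1
  have hσC : σ ≤ C * √Real.pi := (div_le_iff₀ hsp).1 hC1
  have hq0 : (0 : ℝ) < q := by positivity
  have hb : 0 < 1 / (2 * C ^ 2) := by positivity
  have hA : 0 < Real.pi / (2 * σ ^ 2) := by positivity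
  have hAb : 1 / (2 * C ^ 2) ≤ Real.pi / (2 * σ ^ 2) := by
    rw [div_le_div_iff₀ (by positivity) (by positivity)]
    have : σ ^ 2 ≤ (C * √Real.pi) ^ 2 := pow_le_pow_left₀ hσ.le hσC 2
    rw [mul_pow, Real.sq_sqrt hpi.le] at this
    linarith
  set S := {x : ℤ // C < (x : ℝ) ∧ (x : ℝ) < (q : ℝ) / 2} with hS
  set K := (√σ)⁻¹ * Real.exp (1 / 2 - Real.pi / (2 * σ ^ 2) * C ^ 2) with hK
  have hK0 : 0 < K := by positivity
  let g : ℤ → ℝ := fun n => Real.exp (-(1 / (2 * C ^ 2)) * (n : ℝ) ^ 2)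
  have hg : Summable g := gauss_summable hb
  let i : S × ℤ → ℤ := fun p => p.1.1 + q * p.2
  have hi : Function.Injective i := by
    rintro ⟨⟨x, hx1, hx2⟩, k⟩ ⟨⟨y, hy1, hy2⟩, l⟩ h
    simp only [i] at h
    have hx0 : (0 : ℤ) < x := by exact_mod_cast hC0.trans hx1
    have hy0 : (0 : ℤ) < y := by exact_mod_cast hC0.trans hy1
    have hxq : x < q := by
      have : (x : ℝ) < q := by linarith
      exact_mod_cast this
    have hyq : y < q := by
      have : (y : ℝ) < q := by linarith
      exact_mod_cast this
    have hxy : x = y := by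
      have := congrArg (· % (q : ℤ)) h
      simp only [Int.add_mul_emod_self_left] at this
      rwa [Int.emod_eq_of_lt hx0.le hxq, Int.emod_eq_of_lt hy0.le hyq] at this
    subst hxy
    have hq' : (q : ℤ) ≠ 0 := by exact_mod_cast NeZero.ne q
    have : k = l := by
      have h' : (q : ℤ) * k = q * l := by linarith
      exact mul_left_cancel₀ hq' h'
    subst this
    rfl
  have hgi : Summable (g ∘ i) := hg.comp_injective hi
  have habs : ∀ (x : S) (k : ℤ), C ^ 2 ≤ ((i (x, k) : ℤ) : ℝ) ^ 2 := by
    rintro ⟨x, hx1, hx2⟩ k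
    simp only [i]
    push_cast
    rcases le_or_gt 0 k with hk | hk
    · have hk' : (0 : ℝ) ≤ k := by exact_mod_cast hk
      have : C ≤ x + q * k := by nlinarith
      exact pow_le_pow_left₀ hC0.le this 2
    · have hk' : (k : ℝ) ≤ -1 := by exact_mod_cast (by omega : k ≤ -1)
      have : C ≤ -(x + q * k) := by nlinarith
      calc C ^ 2 ≤ (-(x + q * k : ℝ)) ^ 2 := pow_le_pow_left₀ hC0.le this 2
        _ = _ := by ring
  have hterm : ∀ x : S, √(theta1 σ q ((x.1 : ℤ) : ZMod q)) ≤ K * ∑' k, g (i (x, k)) := by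
    intro x
    have hv : ((x.1 : ℤ) : ZMod q).valMinAbs = x.1 := by
      obtain ⟨x, hx1, hx2⟩ := x
      rw [ZMod.valMinAbs_spec]
      have hx0 : (0 : ℤ) < x := by exact_mod_cast hC0.trans hx1
      have hxq : x * 2 < q := by
        have : (x : ℝ) * 2 < q := by linarith
        exact_mod_cast this
      refine ⟨rfl, ?_, hxq.le⟩
      simp only
      omega
    let f : ℤ → ℝ := fun k => Real.exp (-(Real.pi / (2 * σ ^ 2)) * ((i (x, k) : ℤ) : ℝ) ^ 2)
    have hinj : Function.Injective (fun k => i (x, k)) := fun a b h => by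
      have := hi h
      simpa using this
    have hf : Summable f := (gauss_summable hA).comp_injective hinj
    have hgx : Summable (fun k => g (i (x, k))) := hg.comp_injective hinj
    have hsq : ∀ k : ℤ, Real.exp (-Real.pi * ((x.1 : ℝ) + q * k) ^ 2 / σ ^ 2) = f k ^ 2 := by
      intro k
      simp only [f, i]
      rw [← Real.exp_nat_mul]
      congr 1
      push_cast
      field_simp
    unfold theta1
    rw [hv]
    simp only [hsq]
    have hge := gauss_tsum_ge hσ
    have hfg : ∀ k, f k ≤ Real.exp (1 / 2 - Real.pi / (2 * σ ^ 2) * C ^ 2) * g (i (x, k)) := by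
      intro k
      simp only [f, g]
      rw [← Real.exp_add]
      apply Real.exp_le_exp.2
      have h1 := habs x k
      have h2 : 1 / (2 * C ^ 2) * C ^ 2 = 1 / 2 := by field_simp
      nlinarith [mul_nonneg (sub_nonneg.2 hAb) (sub_nonneg.2 h1)]
    calc _ ≤ √((∑' k, f k ^ 2) / σ) := by
          apply Real.sqrt_le_sqrt
          exact div_le_div_of_nonneg_left (tsum_nonneg fun _ => sq_nonneg _) hσ hge
      _ = (√σ)⁻¹ * √(∑' k, f k ^ 2) := by
          rw [Real.sqrt_div (tsum_nonneg fun _ => sq_nonneg _), div_eq_inv_mul]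
      _ ≤ (√σ)⁻¹ * ∑' k, f k := by
          gcongr
          exact sqrt_tsum_sq_le hf (fun _ => (Real.exp_pos _).le)
      _ ≤ (√σ)⁻¹ * ∑' k, Real.exp (1 / 2 - Real.pi / (2 * σ ^ 2) * C ^ 2) * g (i (x, k)) := by
          exact mul_le_mul_of_nonneg_left (hf.tsum_le_tsum hfg (hgx.mul_left _)) (by positivity)
      _ = _ := by rw [tsum_mul_left, hK, mul_assoc]
  have hsum : Summable (fun x : S => K * ∑' k, g (i (x, k))) := (hgi.prod).mul_left K
  have hmain : (∑' x : S, √(theta1 σ q ((x.1 : ℤ) : ZMod q))) ≤ K * ∑' n, g n := by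
    calc _ ≤ ∑' x : S, K * ∑' k, g (i (x, k)) :=
          (Summable.of_nonneg_of_le (fun _ => Real.sqrt_nonneg _) hterm hsum).tsum_le_tsum
            hterm hsum
      _ = K * ∑' p, (g ∘ i) p := by rw [tsum_mul_left, hgi.tsum_prod]; rfl
      _ ≤ _ := by
          gcongr
          exact tsum_comp_le_tsum_of_inj hg (fun _ => (Real.exp_pos _).le) hi
  have hG : ∑' n, g n ≤ 1 + √2 * √Real.pi * C := by
    refine (gauss_tsum_le hb).trans (le_of_eq ?_)
    congr 1
    rw [show Real.pi / (1 / (2 * C ^ 2)) = 2 * Real.pi * C ^ 2 by field_simp,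
      Real.sqrt_mul (by positivity), Real.sqrt_mul (by positivity), Real.sqrt_sq hC0.le]
  have hfin : 1 + √2 * √Real.pi * C ≤ (1 + √2 * σ) * (C / (√2 * σ)) * (√2 * √Real.pi) := by
    have : (1 + √2 * σ) * (C / (√2 * σ)) * (√2 * √Real.pi)
        = C * √Real.pi / σ + √2 * √Real.pi * C := by
      field_simp
    rw [this]
    have : 1 ≤ C * √Real.pi / σ := (one_le_div hσ).2 hσC
    linarith
  calc _ ≤ K * ((1 + √2 * σ) * (C / (√2 * σ)) * (√2 * √Real.pi)) :=
        hmain.trans (mul_le_mul_of_nonneg_left (hG.trans hfin) hK0.le)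
    _ = _ := by
        rw [hK, Real.sqrt_mul (by positivity), Real.sqrt_mul (by positivity),
          ← Real.exp_half 1, sub_eq_add_neg, Real.exp_add,
          show -(Real.pi / (2 * σ ^ 2) * C ^ 2) = -Real.pi * C ^ 2 / (2 * σ ^ 2) by ring]
        ring
end

section
/- Let m ≥ 1 and q ≥ 2 be integers and σ ≥ 2 a real number with q ≥ 2σ√m. Then Σ_{e ∈ (ℤ/qℤ)^m} √(ϑ_{σ,q}(e)) ≤ (2√σ)^m + q^m · exp(−q²/(8σ²)). -/
/-- `ρ_σ(ℤ^m) = Σ_{k ∈ ℤ^m} exp(−π‖k‖²/σ²)`. -/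
noncomputable def rhoZm (σ : ℝ) (m : ℕ) : ℝ :=
  ∑' k : Fin m → ℤ, Real.exp (-Real.pi * (∑ i, ((k i : ℝ)) ^ 2) / σ ^ 2)

/-- Folded discrete Gaussian `ϑ_{σ,q}` on `(ℤ/qℤ)^m`, via the representative
`x̄ ∈ ℤ^m ∩ (−q/2, q/2]^m` of each coordinate (`ZMod.valMinAbs`). -/
noncomputable def thetaM (σ : ℝ) (q m : ℕ) (x : Fin m → ZMod q) : ℝ :=
  (∑' k : Fin m → ℤ,
      Real.exp (-Real.pi * (∑ i, (((x i).valMinAbs : ℝ) + q * k i) ^ 2) / σ ^ 2)) / rhoZm σ m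

open Real in
lemma aux_hasSum_geom (r : ℝ) (h0 : 0 ≤ r) (h1 : r < 1) :
    HasSum (fun n : ℤ => r ^ n.natAbs) ((1 - r)⁻¹ + (1 - r)⁻¹ - 1) := by
  have h := hasSum_geometric_of_lt_one h0 h1
  have := HasSum.of_nat_of_neg (f := fun n : ℤ => r ^ n.natAbs) (by simpa using h)
    (by simpa using h)
  simpa using this

lemma aux_le (b : ℝ) (hb : 0 < b) (n : ℤ) :
    Real.exp (-b * (n : ℝ) ^ 2) ≤ Real.exp (-b) ^ n.natAbs := by
  rw [← Real.exp_nat_mul]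
  apply Real.exp_le_exp.2
  have h1 : ((n.natAbs : ℕ) : ℝ) ≤ (n : ℝ) ^ 2 := by
    have : ((n.natAbs : ℕ) : ℤ) ≤ n ^ 2 := by
      rw [← Int.natAbs_sq n]
      exact_mod_cast Nat.le_self_pow (by norm_num) _
    have h2 : (((n.natAbs : ℕ) : ℤ) : ℝ) ≤ ((n ^ 2 : ℤ) : ℝ) := Int.cast_le.2 this
    rw [Int.cast_natCast, Int.cast_pow] at h2
    exact h2
  nlinarith

lemma aux_summable (b : ℝ) (hb : 0 < b) :
    Summable (fun n : ℤ => Real.exp (-b * (n : ℝ) ^ 2)) :=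
  Summable.of_nonneg_of_le (fun _ => (Real.exp_pos _).le) (aux_le b hb)
    (aux_hasSum_geom _ (Real.exp_pos _).le (Real.exp_lt_one_iff.2 (by linarith))).summable

lemma aux_tsum_le (b : ℝ) (hb : 8 ≤ b) :
    ∑' n : ℤ, Real.exp (-b * (n : ℝ) ^ 2) ≤ Real.sqrt 2 := by
  have hr : Real.exp (-b) ≤ 1 / 9 := by
    rw [Real.exp_neg, ← one_div]
    apply one_div_le_one_div_of_le (by norm_num)
    linarith [Real.add_one_le_exp b]
  have hG := aux_hasSum_geom _ (Real.exp_pos (-b)).le (by linarith)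
  have h1 := (aux_summable b (by linarith)).tsum_le_tsum (aux_le b (by linarith)) hG.summable
  rw [hG.tsum_eq] at h1
  have h2 : (1 - Real.exp (-b))⁻¹ ≤ 9 / 8 := by
    rw [inv_le_comm₀ (by linarith) (by norm_num)]
    linarith
  have h3 : (5 / 4 : ℝ) ≤ Real.sqrt 2 := Real.le_sqrt_of_sq_le (by norm_num)
  linarith

lemma aux_hasSum_pi (m : ℕ) (g : Fin m → ℤ → ℝ) (h0 : ∀ i k, 0 ≤ g i k)
    (hs : ∀ i, Summable (g i)) :
    HasSum (fun k : Fin m → ℤ => ∏ i, g i (k i)) (∏ i, ∑' n, g i n) := by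
  induction m with
  | zero => simp
  | succ m ih =>
    have h := ih (fun i => g i.succ) (fun i k => h0 _ _) (fun i => hs _)
    have hsm : Summable (fun x : ℤ × (Fin m → ℤ) => g 0 x.1 * ∏ i, g (Fin.succ i) (x.2 i)) :=
      Summable.mul_of_nonneg (f := g 0) (g := fun k : Fin m → ℤ => ∏ i, g (Fin.succ i) (k i))
        (hs 0) h.summable (fun k => h0 0 k) (fun k => Finset.prod_nonneg fun i _ => h0 _ _)
    have hm := HasSum.mul (hs 0).hasSum h hsm
    rw [Fin.prod_univ_succ, ← (Fin.consEquiv (fun _ : Fin (m+1) => ℤ)).hasSum_iff]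
    have he : ((fun k : Fin (m + 1) → ℤ => ∏ i, g i (k i)) ∘
        (Fin.consEquiv (fun _ : Fin (m+1) => ℤ)))
        = fun x : ℤ × (Fin m → ℤ) => g 0 x.1 * ∏ i, g (Fin.succ i) (x.2 i) := by
      funext x
      simp [Fin.prod_univ_succ, Fin.consEquiv]
    rw [he]
    exact hm

lemma aux_sqrt_tsum (a : ℤ → ℝ) (h0 : ∀ k, 0 ≤ a k) (hs : Summable (fun k => Real.sqrt (a k))) :
    Real.sqrt (∑' k, a k) ≤ ∑' k, Real.sqrt (a k) := by
  have hA : 0 ≤ ∑' k, Real.sqrt (a k) := tsum_nonneg fun _ => Real.sqrt_nonneg _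
  apply Real.sqrt_le_iff.2 ⟨hA, ?_⟩
  have hle : ∀ k, a k ≤ Real.sqrt (a k) * ∑' k, Real.sqrt (a k) := fun k => by
    conv_lhs => rw [← Real.mul_self_sqrt (h0 k)]
    exact mul_le_mul_of_nonneg_left (hs.le_tsum k fun _ _ => Real.sqrt_nonneg _)
      (Real.sqrt_nonneg _)
  have hs2 := hs.mul_right (∑' k, Real.sqrt (a k))
  have := (Summable.of_nonneg_of_le h0 hle hs2).tsum_le_tsum hle hs2
  rwa [tsum_mul_right, ← sq] at this

lemma aux_inj (q : ℕ) [NeZero q] :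
    Function.Injective (fun p : ZMod q × ℤ => p.1.valMinAbs + (q : ℤ) * p.2) := by
  rintro ⟨x, k⟩ ⟨y, l⟩ h
  simp only at h
  have hxy : x = y := by
    have := congrArg (fun z : ℤ => (z : ZMod q)) h
    simpa using this
  subst hxy
  have hq : (q : ℤ) ≠ 0 := by exact_mod_cast NeZero.ne q
  have : k = l := by
    apply mul_left_cancel₀ hq
    linarith
  rw [this]

/-- one dimensional bound -/
lemma aux_one (q : ℕ) [NeZero q] (σ : ℝ) (hσ : 2 ≤ σ) :
    ∑ x : ZMod q, Real.sqrt ((∑' k : ℤ,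
      Real.exp (-(Real.pi / σ ^ 2) * ((x.valMinAbs : ℝ) + q * k) ^ 2)) /
        ∑' k : ℤ, Real.exp (-(Real.pi / σ ^ 2) * (k : ℝ) ^ 2)) ≤ 2 * Real.sqrt σ := by
  have hσ0 : 0 < σ := by linarith
  have hpi := Real.pi_gt_three
  set b := Real.pi / σ ^ 2 with hb
  have hb0 : 0 < b := by positivity
  have hbh : 0 < b / 2 := by positivity
  -- Poisson summation, lower bound of the denominator
  have hden : σ ≤ ∑' k : ℤ, Real.exp (-b * (k : ℝ) ^ 2) := by
    have hP := Real.tsum_exp_neg_mul_int_sq (a := 1 / σ ^ 2) (by positivity)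
    have e1 : ∀ k : ℤ, -b * (k : ℝ) ^ 2 = -Real.pi * (1 / σ ^ 2) * (k : ℝ) ^ 2 := fun k => by
      rw [hb]; ring
    simp_rw [e1]
    rw [hP, ← Real.sqrt_eq_rpow, Real.sqrt_div (by norm_num), Real.sqrt_sq hσ0.le]
    have hs := aux_summable (Real.pi * σ ^ 2) (by positivity)
    have h1 := hs.le_tsum 0 (fun _ _ => (Real.exp_pos _).le)
    have e2 : ∀ k : ℤ, -Real.pi / (1 / σ ^ 2) * (k : ℝ) ^ 2
        = -(Real.pi * σ ^ 2) * (k : ℝ) ^ 2 := fun k => by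
      field_simp
    simp_rw [e2]
    simp only [Real.sqrt_one, one_div_one_div]
    norm_num at h1
    simp only [neg_mul]
    nlinarith
  have hnum : ∑' k : ℤ, Real.exp (-(b / 2) * (k : ℝ) ^ 2) ≤ 2 * σ := by
    have hP := Real.tsum_exp_neg_mul_int_sq (a := 1 / (2 * σ ^ 2)) (by positivity)
    have e1 : ∀ k : ℤ, -(b / 2) * (k : ℝ) ^ 2
        = -Real.pi * (1 / (2 * σ ^ 2)) * (k : ℝ) ^ 2 := fun k => by
      rw [hb]; field_simp
    simp_rw [e1]
    rw [hP, ← Real.sqrt_eq_rpow, Real.sqrt_div (by norm_num), Real.sqrt_mul (by norm_num),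
      Real.sqrt_sq hσ0.le]
    have h1 := aux_tsum_le (Real.pi * (2 * σ ^ 2)) (by nlinarith)
    have e2 : ∀ k : ℤ, -Real.pi / (1 / (2 * σ ^ 2)) * (k : ℝ) ^ 2
        = -(Real.pi * (2 * σ ^ 2)) * (k : ℝ) ^ 2 := fun k => by
      field_simp
    simp_rw [e2]
    simp only [Real.sqrt_one, one_div_one_div]
    calc _ ≤ Real.sqrt 2 * σ * Real.sqrt 2 := mul_le_mul_of_nonneg_left h1 (by positivity)
      _ = (Real.sqrt 2 * Real.sqrt 2) * σ := by ring
      _ = 2 * σ := by rw [Real.mul_self_sqrt (by norm_num)]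
  have hS := aux_summable (b / 2) hbh
  have hcomp : Summable (fun p : ZMod q × ℤ =>
      Real.exp (-(b / 2) * ((p.1.valMinAbs : ℝ) + q * p.2) ^ 2)) := by
    have := hS.comp_injective (aux_inj q)
    simpa [Function.comp_def] using this
  have hsq : ∀ t : ℝ, Real.sqrt (Real.exp (-b * t ^ 2)) = Real.exp (-(b / 2) * t ^ 2) := by
    intro t
    rw [← Real.exp_half]
    congr 1; ring
  have hsum : ∑ x : ZMod q, Real.sqrt (∑' k : ℤ,
      Real.exp (-b * ((x.valMinAbs : ℝ) + q * k) ^ 2)) ≤ 2 * σ := by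
    calc _ ≤ ∑ x : ZMod q, ∑' k : ℤ,
          Real.exp (-(b / 2) * ((x.valMinAbs : ℝ) + q * k) ^ 2) := by
          apply Finset.sum_le_sum
          intro x _
          have := aux_sqrt_tsum (fun k : ℤ => Real.exp (-b * ((x.valMinAbs : ℝ) + q * k) ^ 2))
            (fun _ => (Real.exp_pos _).le) (by simp_rw [hsq]; exact hcomp.prod_factor x)
          simpa only [hsq] using this
      _ = ∑' p : ZMod q × ℤ,
          Real.exp (-(b / 2) * ((p.1.valMinAbs : ℝ) + q * p.2) ^ 2) := by
          rw [hcomp.tsum_prod, tsum_fintype]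
      _ ≤ ∑' k : ℤ, Real.exp (-(b / 2) * (k : ℝ) ^ 2) := by
          apply hcomp.tsum_le_tsum_of_inj _ (aux_inj q) (fun _ _ => (Real.exp_pos _).le) _ hS
          intro p
          simp
      _ ≤ 2 * σ := hnum
  simp_rw [Real.sqrt_div' _ (hσ0.le.trans hden)]
  rw [← Finset.sum_div, div_le_iff₀ (Real.sqrt_pos.2 (hσ0.trans_le hden))]
  have h5 := Real.sqrt_le_sqrt hden
  have h6 := Real.mul_self_sqrt hσ0.le
  have h7 := Real.sqrt_nonneg σ
  nlinarith

/-- For `m ≥ 1`, `q ≥ 2` and `σ ≥ 2` with `q ≥ 2σ√m`: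
`Σ_{e ∈ (ℤ/qℤ)^m} √(ϑ_{σ,q}(e)) ≤ (2√σ)^m + q^m·exp(−q²/(8σ²))`. -/
theorem stmt_19 (m q : ℕ) [NeZero q] (hm : 1 ≤ m) (hq : 2 ≤ q) (σ : ℝ)
    (hσ : 2 ≤ σ) (hqs : 2 * σ * Real.sqrt m ≤ q) :
    (∑ e : Fin m → ZMod q, Real.sqrt (thetaM σ q m e)) ≤
      (2 * Real.sqrt σ) ^ m + (q : ℝ) ^ m * Real.exp (-(q : ℝ) ^ 2 / (8 * σ ^ 2)) := by
  have hσ0 : 0 < σ := by linarith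
  have hb0 : 0 < Real.pi / σ ^ 2 := by positivity
  have hS := aux_summable _ hb0
  have hexp : ∀ t : Fin m → ℝ, Real.exp (-Real.pi * (∑ i, (t i) ^ 2) / σ ^ 2)
      = ∏ i, Real.exp (-(Real.pi / σ ^ 2) * (t i) ^ 2) := by
    intro t
    rw [← Real.exp_sum, ← Finset.mul_sum]
    congr 1; ring
  have hfib : ∀ x : ZMod q, Summable (fun k : ℤ =>
      Real.exp (-(Real.pi / σ ^ 2) * ((x.valMinAbs : ℝ) + q * k) ^ 2)) := by
    intro x
    have := (hS.comp_injective (aux_inj q)).prod_factor x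
    simpa [Function.comp_def] using this
  have hth : ∀ e : Fin m → ZMod q, Real.sqrt (thetaM σ q m e) = ∏ i, Real.sqrt ((∑' k : ℤ,
      Real.exp (-(Real.pi / σ ^ 2) * (((e i).valMinAbs : ℝ) + q * k) ^ 2)) /
        ∑' k : ℤ, Real.exp (-(Real.pi / σ ^ 2) * (k : ℝ) ^ 2)) := by
    intro e
    have hn := (aux_hasSum_pi m (fun i k =>
      Real.exp (-(Real.pi / σ ^ 2) * (((e i).valMinAbs : ℝ) + q * k) ^ 2))
      (fun _ _ => (Real.exp_pos _).le) (fun i => hfib (e i))).tsum_eq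
    have hd := (aux_hasSum_pi m (fun _ k => Real.exp (-(Real.pi / σ ^ 2) * (k : ℝ) ^ 2))
      (fun _ _ => (Real.exp_pos _).le) (fun _ => hS)).tsum_eq
    rw [thetaM, rhoZm]
    simp_rw [hexp]
    rw [hn, hd, ← Finset.prod_div_distrib, Real.sqrt_eq_rpow, ← Real.finsetProd_rpow]
    · simp_rw [← Real.sqrt_eq_rpow]
    · intro i _
      exact div_nonneg (tsum_nonneg fun _ => (Real.exp_pos _).le)
        (tsum_nonneg fun _ => (Real.exp_pos _).le)
  simp_rw [hth]
  have h1 := aux_one q σ hσ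
  have h2 := Finset.prod_univ_sum (fun _ : Fin m => (Finset.univ : Finset (ZMod q)))
    (fun _ x => Real.sqrt ((∑' k : ℤ,
      Real.exp (-(Real.pi / σ ^ 2) * ((x.valMinAbs : ℝ) + q * k) ^ 2)) /
        ∑' k : ℤ, Real.exp (-(Real.pi / σ ^ 2) * (k : ℝ) ^ 2)))
  rw [Fintype.piFinset_univ] at h2
  rw [← h2, Finset.prod_const, Finset.card_univ, Fintype.card_fin]
  have h3 := pow_le_pow_left₀ (Finset.sum_nonneg fun _ _ => Real.sqrt_nonneg _) h1 m
  have h4 : 0 ≤ (q : ℝ) ^ m * Real.exp (-(q : ℝ) ^ 2 / (8 * σ ^ 2)) := by positivity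
  linarith
end
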